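/- Let μ > −1, −μ−1 < ν ≤ 0 and 0 < β < 1. Then for all x > 0, ∫_0^x e^{−βu} u^ν t̃_{μ,ν}(u) du > (1/(1−β)) · ( e^{−βx} x^ν t̃_{μ,ν}(x) − B_{μ,ν,β}(x) ). -/

import Mathlib

/-!
Put `s = μ + ν + 1`, `a = (μ - ν + 1) / 2`, `b = s / 2`, so that `0 < b ≤ a`, and let
`H z = ∑ k, A k * z ^ k` with `A k = 1 / (Γ (k + a + 1) * Γ (k + b + 1))`. Then
`T u = u ^ ν * lommel μ ν u = 2 ^ (-(μ + 1)) * u ^ s * H (u ^ 2 / 4)`. Since `T` vanishes at `0`,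
`exp (-β x) * T x` is the integral over `(0, x)` of `exp (-β u) * (T' u - β * T u)`, and the
substitution `u ↦ β u` writes `Bconst μ ν β x` as the integral of
`exp (-β u) * u ^ (μ + ν) / (2 ^ μ * Γ a * Γ (b + 1))`. So the claim follows from the pointwise
inequality `T' u - T u < u ^ (μ + ν) / (2 ^ μ * Γ a * Γ (b + 1))`.

In terms of `H` and `y = u / 2` this inequality reads
`b * H (y ^ 2) + y ^ 2 * H' (y ^ 2) < y * H (y ^ 2) + 1 / (Γ a * Γ (b + 1))` (`lommelSeries_lt`).
The constant term on the left is `b / a` times the constant on the right, hence at most that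
constant, because `b ≤ a`. The term of index `k + 1` on the left is at most `y` times the average
of two consecutive terms of `H` (AM-GM, and again `b ≤ a`), and the sum of these averages is
`H - A 0 / 2 < H`.
-/

open Real MeasureTheory

/-- Normalised modified Lommel function of the first kind. -/
noncomputable def lommel (μ ν x : ℝ) : ℝ :=
  ∑' k : ℕ, (x / 2) ^ (μ + 2 * (k : ℝ) + 1) /
    (Real.Gamma ((k : ℝ) + (μ - ν + 3) / 2) * Real.Gamma ((k : ℝ) + (μ + ν + 3) / 2))

/-- Lower incomplete gamma function. -/
noncomputable def lowerGamma (a x : ℝ) : ℝ :=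
  ∫ u in (0:ℝ)..x, Real.exp (-u) * u ^ (a - 1)

noncomputable def Bconst (μ ν β x : ℝ) : ℝ :=
  β ^ (-μ - ν - 1) * lowerGamma (μ + ν + 1) (β * x) /
    (2 ^ μ * Real.Gamma ((μ - ν + 1) / 2) * Real.Gamma ((μ + ν + 3) / 2))

/-- A power series whose coefficients are bounded by a multiple of `1 / k!` converges. -/
lemma summable_of_le_factorial {c : ℕ → ℝ} {M : ℝ} (hc : ∀ k, |c k| ≤ M / (k.factorial : ℝ))
    (z : ℝ) : Summable fun k => c k * z ^ k := by
  refine Summable.of_norm_bounded ((Real.summable_pow_div_factorial |z|).mul_left M) fun k => ?_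
  rw [Real.norm_eq_abs, abs_mul, abs_pow]
  calc |c k| * |z| ^ k ≤ M / (k.factorial : ℝ) * |z| ^ k := by gcongr; exact hc k
    _ = M * (|z| ^ k / (k.factorial : ℝ)) := by ring

/-- The coefficients of the derived series satisfy the same factorial bound. -/
lemma deriv_coeff_le {c : ℕ → ℝ} {M : ℝ} (hc : ∀ k, |c k| ≤ M / (k.factorial : ℝ)) (k : ℕ) :
    |((k : ℝ) + 1) * c (k + 1)| ≤ M / (k.factorial : ℝ) := by
  have h := hc (k + 1)
  have hk : (0 : ℝ) < k + 1 := by positivity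
  have hf : (0 : ℝ) < k.factorial := by positivity
  rw [abs_mul, abs_of_pos hk]
  calc ((k : ℝ) + 1) * |c (k + 1)| ≤ (k + 1) * (M / ((k + 1).factorial : ℝ)) := by gcongr
    _ = M / (k.factorial : ℝ) := by
      rw [Nat.factorial_succ]; push_cast; field_simp

lemma hasDerivAt_series {c : ℕ → ℝ} {M : ℝ} (hc : ∀ k, |c k| ≤ M / (k.factorial : ℝ)) (z : ℝ) :
    HasDerivAt (fun z => ∑' k, c k * z ^ k) (∑' k : ℕ, ((k : ℝ) + 1) * c (k + 1) * z ^ k) z := by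
  set R := |z| + 1 with hR
  have hR0 : 0 ≤ R := by positivity
  have hM : ∀ k : ℕ, |((k : ℝ) + 1) * c (k + 1)| ≤ M / (k.factorial : ℝ) := deriv_coeff_le hc
  have hsum : Summable fun k : ℕ => |c k| * (k * R ^ (k - 1)) := by
    rw [← summable_nat_add_iff 1]
    have h := (summable_of_le_factorial (c := fun k => |((k : ℝ) + 1) * c (k + 1)|)
      (M := M) (fun k => by rw [abs_abs]; exact hM k) R)
    refine h.congr fun k => ?_
    have hk : (0 : ℝ) < k + 1 := by positivity
    rw [abs_mul, abs_of_pos hk]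
    push_cast
    ring
  have hz : z ∈ Metric.ball (0 : ℝ) R := by
    rw [mem_ball_zero_iff, Real.norm_eq_abs]; linarith
  have key := hasDerivAt_tsum_of_isPreconnected (g := fun k z => c k * z ^ k)
    (g' := fun k z => c k * (k * z ^ (k - 1))) hsum Metric.isOpen_ball
    (convex_ball (0 : ℝ) R).isPreconnected
    (fun k y _ => (hasDerivAt_pow k y).const_mul (c k))
    (fun k y hy => by
      rw [mem_ball_zero_iff, Real.norm_eq_abs] at hy
      rw [Real.norm_eq_abs, abs_mul, abs_mul, abs_pow, Nat.abs_cast]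
      gcongr) hz (summable_of_le_factorial hc z) hz
  refine key.congr_deriv ?_
  have hs : Summable fun k : ℕ => c k * ((k : ℝ) * z ^ (k - 1)) := by
    refine Summable.of_norm_bounded hsum fun k => ?_
    rw [mem_ball_zero_iff, Real.norm_eq_abs] at hz
    rw [Real.norm_eq_abs, abs_mul, abs_mul, abs_pow, Nat.abs_cast]
    gcongr
  rw [hs.tsum_eq_zero_add]
  simp only [Nat.cast_zero, zero_mul, mul_zero, zero_add]
  refine tsum_congr fun k => ?_
  push_cast
  ring

/-- The coefficients `1 / (Γ (k + a + 1) Γ (k + b + 1))` of the modified Lommel function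
`lommel (a + b - 1) (b - a)`, up to powers of `2`. -/
noncomputable def lommelCoeff (a b : ℝ) (k : ℕ) : ℝ :=
  1 / (Real.Gamma (k + a + 1) * Real.Gamma (k + b + 1))

/-- The entire function `∑ k, z ^ k / (Γ (k + a + 1) Γ (k + b + 1))`. -/
noncomputable def lommelSeries (a b z : ℝ) : ℝ := ∑' k, lommelCoeff a b k * z ^ k

/-- The derivative of `lommelSeries a b`, as a power series. -/
noncomputable def lommelSeries' (a b z : ℝ) : ℝ :=
  ∑' k : ℕ, ((k : ℝ) + 1) * lommelCoeff a b (k + 1) * z ^ k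

lemma lommelCoeff_pos {a b : ℝ} (ha : 0 < a) (hb : 0 < b) (k : ℕ) : 0 < lommelCoeff a b k := by
  have h1 : 0 < Real.Gamma (k + a + 1) := Real.Gamma_pos_of_pos (by positivity)
  have h2 : 0 < Real.Gamma (k + b + 1) := Real.Gamma_pos_of_pos (by positivity)
  unfold lommelCoeff
  positivity

lemma lommelCoeff_succ {a b : ℝ} (ha : 0 < a) (hb : 0 < b) (k : ℕ) :
    lommelCoeff a b (k + 1) = lommelCoeff a b k / ((k + a + 1) * (k + b + 1)) := by
  have ha' : (k : ℝ) + a + 1 ≠ 0 := by positivity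
  have hb' : (k : ℝ) + b + 1 ≠ 0 := by positivity
  unfold lommelCoeff
  push_cast
  rw [show (k : ℝ) + 1 + a + 1 = (k + a + 1) + 1 by ring,
    show (k : ℝ) + 1 + b + 1 = (k + b + 1) + 1 by ring,
    Real.Gamma_add_one ha', Real.Gamma_add_one hb', div_div]
  congr 1
  ring

lemma lommelCoeff_le {a b : ℝ} (ha : 0 < a) (hb : 0 < b) (k : ℕ) :
    |lommelCoeff a b k| ≤ lommelCoeff a b 0 / (k.factorial : ℝ) := by
  rw [abs_of_pos (lommelCoeff_pos ha hb k)]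
  induction k with
  | zero => simp
  | succ k ih =>
    have hA := lommelCoeff_pos ha hb k
    have hk : (0 : ℝ) ≤ k := by positivity
    rw [lommelCoeff_succ ha hb, Nat.factorial_succ]
    push_cast
    rw [mul_comm ((k : ℝ) + 1) (k.factorial : ℝ), ← div_div (lommelCoeff a b 0)]
    have : (k : ℝ) + 1 ≤ (k + a + 1) * (k + b + 1) := by nlinarith [mul_pos ha hb]
    exact div_le_div₀ (by have := lommelCoeff_pos ha hb 0; positivity) ih (by positivity) this

lemma hasDerivAt_lommelSeries {a b : ℝ} (ha : 0 < a) (hb : 0 < b) (z : ℝ) :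
    HasDerivAt (lommelSeries a b) (lommelSeries' a b z) z :=
  hasDerivAt_series (lommelCoeff_le ha hb) z

lemma continuous_lommelSeries {a b : ℝ} (ha : 0 < a) (hb : 0 < b) :
    Continuous (lommelSeries a b) :=
  continuous_iff_continuousAt.2 fun z => (hasDerivAt_lommelSeries ha hb z).continuousAt

lemma continuous_lommelSeries' {a b : ℝ} (ha : 0 < a) (hb : 0 < b) :
    Continuous (lommelSeries' a b) :=
  continuous_iff_continuousAt.2 fun z =>
    (hasDerivAt_series (deriv_coeff_le (lommelCoeff_le ha hb)) z).continuousAt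

/-- The pointwise inequality behind the theorem, obtained by comparing the two sides termwise. -/
lemma lommelSeries_lt {a b y : ℝ} (hb : 0 < b) (hab : b ≤ a) (hy : 0 < y) :
    b * lommelSeries a b (y ^ 2) + y ^ 2 * lommelSeries' a b (y ^ 2) <
      y * lommelSeries a b (y ^ 2) + 1 / (Real.Gamma a * Real.Gamma (b + 1)) := by
  have ha : 0 < a := hb.trans_le hab
  set A := lommelCoeff a b with hAdef
  have hApos : ∀ k, 0 < A k := lommelCoeff_pos ha hb
  have hS : Summable fun k => A k * (y ^ 2) ^ k :=
    summable_of_le_factorial (lommelCoeff_le ha hb) _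
  have hS' : Summable fun k : ℕ => ((k : ℝ) + 1) * A (k + 1) * (y ^ 2) ^ k :=
    summable_of_le_factorial (deriv_coeff_le (lommelCoeff_le ha hb)) _
  have hS1 : Summable fun k => A (k + 1) * (y ^ 2) ^ (k + 1) :=
    (summable_nat_add_iff 1).2 hS
  have hH : lommelSeries a b (y ^ 2) = A 0 + ∑' k, A (k + 1) * (y ^ 2) ^ (k + 1) := by
    unfold lommelSeries
    rw [hS.tsum_eq_zero_add]; simp [hAdef]
  have hH' : y ^ 2 * lommelSeries' a b (y ^ 2) =
      ∑' k : ℕ, y ^ 2 * (((k : ℝ) + 1) * A (k + 1) * (y ^ 2) ^ k) := by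
    rw [tsum_mul_left]; rfl
  have hzero : b * A 0 ≤ 1 / (Real.Gamma a * Real.Gamma (b + 1)) := by
    have h1 : 0 < Real.Gamma a := Real.Gamma_pos_of_pos ha
    have h2 : 0 < Real.Gamma (b + 1) := Real.Gamma_pos_of_pos (by positivity)
    simp only [hAdef, lommelCoeff, Nat.cast_zero, zero_add]
    rw [Real.Gamma_add_one ha.ne', mul_one_div, div_le_div_iff₀ (by positivity) (by positivity)]
    have := mul_le_mul_of_nonneg_right hab (mul_pos h1 h2).le
    linarith
  -- The right side is `y` times the average of the terms of index `k` and `k + 1`.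
  have hterm : ∀ k : ℕ, b * (A (k + 1) * (y ^ 2) ^ (k + 1)) +
      y ^ 2 * (((k : ℝ) + 1) * A (k + 1) * (y ^ 2) ^ k) ≤
      y / 2 * (A k * (y ^ 2) ^ k) + y / 2 * (A (k + 1) * (y ^ 2) ^ (k + 1)) := by
    intro k
    have hp : (0 : ℝ) < k + a + 1 := by positivity
    have hq : (0 : ℝ) < k + b + 1 := by positivity
    have hpq : (k : ℝ) + b + 1 ≤ k + a + 1 := by linarith
    rw [hAdef, lommelCoeff_succ ha hb, ← hAdef]
    generalize hpe : (k : ℝ) + a + 1 = p at *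
    generalize hqe : (k : ℝ) + b + 1 = q at *
    have hmain : 2 * y / p ≤ 1 + y ^ 2 / (p * q) := by
      have h1 : y ^ 2 / (p * p) ≤ y ^ 2 / (p * q) := by gcongr
      have h2 : y ^ 2 / (p * p) = (y / p) ^ 2 := by field_simp
      have h3 : 2 * y / p = 2 * (y / p) := by ring
      nlinarith [sq_nonneg (y / p - 1)]
    have hw : 0 < y / 2 * (A k * (y ^ 2) ^ k) := by have := hApos k; positivity
    have := mul_le_mul_of_nonneg_left hmain hw.le
    calc _ = A k * (y ^ 2) ^ k * y ^ 2 * q / (p * q) := by rw [← hqe]; ring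
      _ = y / 2 * (A k * (y ^ 2) ^ k) * (2 * y / p) := by field_simp
      _ ≤ _ := this
      _ = _ := by ring
  have hle := Summable.tsum_le_tsum hterm ((hS1.mul_left b).add (hS'.mul_left (y ^ 2)))
    ((hS.mul_left (y / 2)).add (hS1.mul_left (y / 2)))
  rw [(hS1.mul_left b).tsum_add (hS'.mul_left (y ^ 2)),
    (hS.mul_left (y / 2)).tsum_add (hS1.mul_left (y / 2)), ← hH', tsum_mul_left, tsum_mul_left,
    tsum_mul_left, hS.tsum_eq_zero_add] at hle
  rw [hH]
  have h0 : 0 < y * A 0 := mul_pos hy (hApos 0)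
  simp only [pow_zero, mul_one] at hle
  linarith

/-- The identity `u ^ ν * lommel μ ν u = 2 ^ (-(μ + 1)) * u ^ (μ + ν + 1) * H (u ^ 2 / 4)`. -/
lemma rpow_mul_lommel (μ ν : ℝ) {u : ℝ} (hu : 0 < u) :
    u ^ ν * lommel μ ν u = 2 ^ (-(μ + 1)) * (u ^ (μ + ν) * u) *
      lommelSeries ((μ - ν + 1) / 2) ((μ + ν + 1) / 2) ((u / 2) ^ 2) := by
  unfold lommel lommelSeries lommelCoeff
  rw [← tsum_mul_left, ← tsum_mul_left]
  refine tsum_congr fun k => ?_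
  have h2 : (0 : ℝ) < u / 2 := by positivity
  rw [show (k : ℝ) + (μ - ν + 3) / 2 = k + (μ - ν + 1) / 2 + 1 by ring,
    show (k : ℝ) + (μ + ν + 3) / 2 = k + (μ + ν + 1) / 2 + 1 by ring,
    show μ + 2 * (k : ℝ) + 1 = (μ + 1) + ((2 * k : ℕ) : ℝ) by push_cast; ring,
    Real.rpow_add h2, Real.rpow_natCast, pow_mul, Real.div_rpow hu.le (by norm_num),
    Real.rpow_neg (by norm_num), Real.rpow_add hu μ 1, Real.rpow_one, Real.rpow_add hu μ ν]
  ring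

/-- The substitution `u ↦ β u` in the incomplete gamma function. -/
lemma Bconst_eq (μ ν : ℝ) {β x : ℝ} (hβ : 0 < β) (hx : 0 < x) :
    Bconst μ ν β x = ∫ u in (0 : ℝ)..x, Real.exp (-β * u) * u ^ (μ + ν) *
      (2 ^ (-(μ + 1)) * 2 *
        (1 / (Real.Gamma ((μ - ν + 1) / 2) * Real.Gamma ((μ + ν + 1) / 2 + 1)))) := by
  rw [intervalIntegral.integral_mul_const]
  have h := intervalIntegral.integral_comp_mul_left (a := 0) (b := x)
    (fun u => Real.exp (-u) * u ^ (μ + ν)) hβ.ne'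
  have h' : ∫ u in (0 : ℝ)..x, Real.exp (-(β * u)) * (β * u) ^ (μ + ν) =
      β ^ (μ + ν) * ∫ u in (0 : ℝ)..x, Real.exp (-β * u) * u ^ (μ + ν) := by
    rw [← intervalIntegral.integral_const_mul]
    refine intervalIntegral.integral_congr fun u hu => ?_
    rw [Set.uIcc_of_le hx.le] at hu
    rw [Real.mul_rpow hβ.le hu.1, neg_mul]
    ring
  rw [h', mul_zero, smul_eq_mul, inv_mul_eq_div, eq_div_iff hβ.ne'] at h
  unfold Bconst lowerGamma
  rw [show μ + ν + 1 - 1 = μ + ν by ring, ← h,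
    show (μ + ν + 3) / 2 = (μ + ν + 1) / 2 + 1 by ring,
    show -μ - ν - 1 = -(μ + ν) + -1 by ring, Real.rpow_add hβ, Real.rpow_neg hβ.le,
    Real.rpow_neg_one, show -(μ + 1) = -μ + -1 by ring, Real.rpow_add (by norm_num : (0:ℝ) < 2),
    Real.rpow_neg (by norm_num), Real.rpow_neg_one]
  have hb : β ^ (μ + ν) ≠ 0 := (Real.rpow_pos_of_pos hβ _).ne'
  field_simp

theorem stmt4 (μ ν β : ℝ) (hμ : μ > -1) (hν1 : -μ - 1 < ν) (hν2 : ν ≤ 0)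
    (hβ1 : 0 < β) (hβ2 : β < 1) :
    ∀ x : ℝ, 0 < x →
      ∫ u in (0:ℝ)..x, Real.exp (-β * u) * u ^ ν * lommel μ ν u >
        1 / (1 - β) * (Real.exp (-β * x) * x ^ ν * lommel μ ν x - Bconst μ ν β x) := by
  intro x hx
  have hb : 0 < (μ + ν + 1) / 2 := by linarith
  have hab : (μ + ν + 1) / 2 ≤ (μ - ν + 1) / 2 := by linarith
  have ha : 0 < (μ - ν + 1) / 2 := hb.trans_le hab
  have hs : 0 < μ + ν + 1 := by linarith
  have hlt := fun u (hu : 0 < u) => lommelSeries_lt hb hab hu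
  have hH := hasDerivAt_lommelSeries ha hb
  have hHc := continuous_lommelSeries ha hb
  have hHc' := continuous_lommelSeries' ha hb
  have hlom := fun u (hu : 0 < u) => rpow_mul_lommel μ ν hu
  have hB := Bconst_eq μ ν hβ1 hx
  have hK : (0 : ℝ) < 2 ^ (-(μ + 1)) := by positivity
  set C := 1 / (Real.Gamma ((μ - ν + 1) / 2) * Real.Gamma ((μ + ν + 1) / 2 + 1))
  set H := lommelSeries ((μ - ν + 1) / 2) ((μ + ν + 1) / 2)
  set H' := lommelSeries' ((μ - ν + 1) / 2) ((μ + ν + 1) / 2)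
  set K : ℝ := 2 ^ (-(μ + 1))
  have hint : ∀ f : ℝ → ℝ, Continuous f → IntervalIntegrable
      (fun u => Real.exp (-β * u) * u ^ (μ + ν) * f u) volume 0 x := by
    intro f hf
    have h := (intervalIntegral.intervalIntegrable_rpow' (a := 0) (b := x)
      (r := μ + ν) (by linarith)).mul_continuousOn
      (g := fun u => Real.exp (-β * u) * f u) (by fun_prop)
    refine h.congr (fun u _ => ?_)
    ring
  have hI : ∫ u in (0:ℝ)..x, Real.exp (-β * u) * u ^ ν * lommel μ ν u =
      ∫ u in (0:ℝ)..x, Real.exp (-β * u) * u ^ (μ + ν) * (K * u * H ((u / 2) ^ 2)) := by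
    refine intervalIntegral.integral_congr_uIoo fun u hu => ?_
    rw [Set.uIoo_of_le hx.le] at hu
    rw [mul_assoc, hlom u hu.1]
    ring
  have hE : Real.exp (-β * x) * x ^ ν * lommel μ ν x =
      ∫ u in (0:ℝ)..x, Real.exp (-β * u) * u ^ (μ + ν) *
        (K * ((μ + ν + 1 - β * u) * H ((u / 2) ^ 2) + u ^ 2 / 2 * H' ((u / 2) ^ 2))) := by
    have h := intervalIntegral.integral_eq_sub_of_hasDerivAt_of_le hx.le
      (f := fun u => Real.exp (-β * u) * (K * u ^ (μ + ν + 1) * H ((u / 2) ^ 2)))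
      (f' := fun u => Real.exp (-β * u) * u ^ (μ + ν) *
        (K * ((μ + ν + 1 - β * u) * H ((u / 2) ^ 2) + u ^ 2 / 2 * H' ((u / 2) ^ 2))))
      ?_ ?_ (hint _ (by fun_prop))
    · rw [h, mul_assoc, hlom x hx, Real.zero_rpow hs.ne', Real.rpow_add hx (μ + ν) 1, Real.rpow_one]
      ring
    · have := (Real.continuous_rpow_const hs.le)
      fun_prop
    · intro u hu
      have h1 : HasDerivAt (fun u => Real.exp (-β * u)) (Real.exp (-β * u) * (-β * 1)) u :=
        ((hasDerivAt_id u).const_mul (-β)).exp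
      have h2 := (Real.hasDerivAt_rpow_const (x := u) (p := μ + ν + 1) (Or.inl hu.1.ne'))
      have h3 : HasDerivAt (fun u : ℝ => (u / 2) ^ 2) (u / 2) u := by
        refine (((hasDerivAt_id' u).div_const 2).fun_pow 2).congr_deriv ?_
        push_cast
        ring
      have h4 : HasDerivAt (fun u => H ((u / 2) ^ 2)) (H' ((u / 2) ^ 2) * (u / 2)) u :=
        HasDerivAt.comp (h₂ := H) u (hH ((u / 2) ^ 2)) h3
      refine (h1.fun_mul ((h2.const_mul K).fun_mul h4)).congr_deriv ?_
      rw [show μ + ν + 1 - 1 = μ + ν by ring, Real.rpow_add hu.1 (μ + ν) 1, Real.rpow_one]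
      ring
  have hpos : 0 < ∫ u in (0:ℝ)..x, Real.exp (-β * u) * u ^ (μ + ν) *
      (2 * K * (u / 2 * H ((u / 2) ^ 2) + C - ((μ + ν + 1) / 2 * H ((u / 2) ^ 2) +
        (u / 2) ^ 2 * H' ((u / 2) ^ 2)))) := by
    refine intervalIntegral.intervalIntegral_pos_of_pos_on (hint _ (by fun_prop)) ?_ hx
    intro u hu
    have h1 := hlt (u / 2) (half_pos hu.1)
    have h2 := Real.rpow_pos_of_pos hu.1 (μ + ν)
    have h3 := sub_pos.2 h1
    positivity
  have hcomb : (1 - β) * (∫ u in (0:ℝ)..x, Real.exp (-β * u) * u ^ ν * lommel μ ν u) +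
      Bconst μ ν β x - Real.exp (-β * x) * x ^ ν * lommel μ ν x =
      ∫ u in (0:ℝ)..x, Real.exp (-β * u) * u ^ (μ + ν) *
      (2 * K * (u / 2 * H ((u / 2) ^ 2) + C - ((μ + ν + 1) / 2 * H ((u / 2) ^ 2) +
        (u / 2) ^ 2 * H' ((u / 2) ^ 2)))) := by
    rw [hI, hE, hB, ← intervalIntegral.integral_const_mul, ← intervalIntegral.integral_add
      ((hint _ (by fun_prop)).const_mul _) (hint _ (by fun_prop)),
      ← intervalIntegral.integral_sub
      (((hint _ (by fun_prop)).const_mul _).add (hint _ (by fun_prop))) (hint _ (by fun_prop))]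
    refine intervalIntegral.integral_congr fun u _ => ?_
    ring
  rw [← hcomb] at hpos
  rw [gt_iff_lt, one_div, inv_mul_lt_iff₀ (by linarith)]
  linarith
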